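/- arXiv:2305.11535 — 2 statements merged into one kernel-verified Lean document; each statement's English description precedes it below -/
import Mathlib

section
/- Let S be a conditionally completely regular semigroup and let s ∈ S be an element with no weak inverse (W(s) = ∅). Then for every t ∈ S, the elements s*t and t*s also have no weak inverse. Consequently, either S is E-dense or the set {s ∈ S | W(s) = ∅} is a two-sided ideal of S. -/
/-- Green's relation ℒ: `s ℒ t` iff `{s} ∪ Ss = {t} ∪ St`. -/
def LRel {S : Type*} [Semigroup S] (s t : S) : Prop :=
  ({s} ∪ {x | ∃ a : S, x = a * s} : Set S) = ({t} ∪ {x | ∃ a : S, x = a * t} : Set S)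

/-- Green's relation ℛ: `s ℛ t` iff `{s} ∪ sS = {t} ∪ tS`. -/
def RRel {S : Type*} [Semigroup S] (s t : S) : Prop :=
  ({s} ∪ {x | ∃ a : S, x = s * a} : Set S) = ({t} ∪ {x | ∃ a : S, x = t * a} : Set S)

/-- Green's relation ℋ = ℒ ∩ ℛ. -/
def HRel {S : Type*} [Semigroup S] (s t : S) : Prop := LRel s t ∧ RRel s t

/-- Green's relation 𝒟: `s 𝒟 t` iff `∃ u, s ℒ u` and `u ℛ t`. -/
def DRel {S : Type*} [Semigroup S] (s t : S) : Prop := ∃ u : S, LRel s u ∧ RRel u t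

/-- An element `s` is regular if `s = s * x * s` for some `x`. -/
def IsRegularElem {S : Type*} [Semigroup S] (s : S) : Prop := ∃ x : S, s = s * x * s

/-- `S` is conditionally completely regular if every regular element is
ℋ-related to an idempotent. -/
def CondCompletelyRegular (S : Type*) [Semigroup S] : Prop :=
  ∀ s : S, IsRegularElem s → ∃ e : S, e * e = e ∧ HRel s e

/-- `z` is a weak inverse of `s`, i.e. `z ∈ W(s)`. -/
def IsWeakInverse {S : Type*} [Semigroup S] (z s : S) : Prop := z = z * s * z

namespace IsWeakInverse

variable {S : Type*} [Semigroup S] {s t z : S}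

theorem mul_left_of_mul (h : IsWeakInverse z (s * t)) : IsWeakInverse (t * z) s :=
  calc t * z = t * (z * (s * t) * z) := congrArg (t * ·) h
    _ = t * z * s * (t * z) := by simp only [mul_assoc]

theorem mul_right_of_mul (h : IsWeakInverse z (s * t)) : IsWeakInverse (z * s) t :=
  calc z * s = z * (s * t) * z * s := congrArg (· * s) h
    _ = z * s * t * (z * s) := by simp only [mul_assoc]

end IsWeakInverse

theorem stmt15_general {S : Type*} [Semigroup S] {s : S} (hs : ¬∃ z, IsWeakInverse z s) (t : S) :
    (¬∃ z, IsWeakInverse z (s * t)) ∧ ¬∃ z, IsWeakInverse z (t * s) :=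
  ⟨fun ⟨z, hz⟩ => hs ⟨t * z, hz.mul_left_of_mul⟩,
    fun ⟨z, hz⟩ => hs ⟨z * t, hz.mul_right_of_mul⟩⟩

/-- In a conditionally completely regular semigroup, if `s` has no weak inverse
then neither does `s*t` nor `t*s`; hence either `S` is E-dense or
`{s | W(s) = ∅}` is a two-sided ideal. -/
theorem stmt15 {S : Type*} [Semigroup S] (hS : CondCompletelyRegular S)
    (s : S) (hs : ¬∃ z : S, z = z * s * z) :
    ∀ t : S, (¬∃ z : S, z = z * (s * t) * z) ∧ (¬∃ z : S, z = z * (t * s) * z) :=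
  stmt15_general hs
end

section
/- Let S be a conditionally completely regular semigroup and let s, t ∈ S both be regular. Then s ρ t if and only if s 𝒟 t, where ρ is the relation: s ρ t iff for every x ∈ S, (some weak inverse of s is 𝒟-related to x) ↔ (some weak inverse of t is 𝒟-related to x). -/
/-- The relation ρ: `s ρ t` iff for every `x`, some weak inverse of `s` is
𝒟-related to `x` exactly when some weak inverse of `t` is. -/
def rhoRel {S : Type*} [Semigroup S] (s t : S) : Prop :=
  ∀ x : S, (∃ z : S, z = z * s * z ∧ DRel z x) ↔ (∃ z : S, z = z * t * z ∧ DRel z x)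

/-
`𝒟`-related elements have weak inverses in the same `𝒟`-classes, because a factorization
`s = p * u` turns a weak inverse `z` of `s` into the weak inverse `z * p` of `u`. Conversely,
`s ρ t` puts a weak inverse of `t` into the `𝒟`-class of `s`, so `s` lies in `StS`, and
symmetrically `t` lies in `SsS`. It remains to see that `𝒥 = 𝒟` among the regular elements of a
conditionally completely regular semigroup. For idempotents `e` and `f` with `e ∈ SfS` there is an
idempotent `k ≤ f` with `e 𝒟 k`; if also `f ∈ SeS = SkS`, then `f ℛ a` for some regular `a ∈ Sk`,
and the idempotent in the `ℋ`-class of `a` has to be both `f` and `k`.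
-/

section

variable {S : Type*} [Semigroup S] {e f k s t u x y z : S}

theorem lRel_iff : LRel s t ↔ s = t ∨ (∃ a, s = a * t) ∧ ∃ b, t = b * s := by
  constructor
  · intro h
    have hst : s = t ∨ ∃ a, s = a * t := h.subset (Or.inl rfl)
    have hts : t = s ∨ ∃ b, t = b * s := h.superset (Or.inl rfl)
    tauto
  · rintro (rfl | ⟨⟨a, ha⟩, b, hb⟩)
    · rfl
    · ext x
      constructor
      · rintro (rfl | ⟨c, rfl⟩)
        · exact Or.inr ⟨a, ha⟩
        · exact Or.inr ⟨c * a, by rw [mul_assoc, ← ha]⟩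
      · rintro (rfl | ⟨c, rfl⟩)
        · exact Or.inr ⟨b, hb⟩
        · exact Or.inr ⟨c * b, by rw [mul_assoc, ← hb]⟩

theorem rRel_iff : RRel s t ↔ s = t ∨ (∃ a, s = t * a) ∧ ∃ b, t = s * b := by
  constructor
  · intro h
    have hst : s = t ∨ ∃ a, s = t * a := h.subset (Or.inl rfl)
    have hts : t = s ∨ ∃ b, t = s * b := h.superset (Or.inl rfl)
    tauto
  · rintro (rfl | ⟨⟨a, ha⟩, b, hb⟩)
    · rfl
    · ext x
      constructor
      · rintro (rfl | ⟨c, rfl⟩)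
        · exact Or.inr ⟨a, ha⟩
        · exact Or.inr ⟨a * c, by rw [← mul_assoc, ← ha]⟩
      · rintro (rfl | ⟨c, rfl⟩)
        · exact Or.inr ⟨b, hb⟩
        · exact Or.inr ⟨b * c, by rw [← mul_assoc, ← hb]⟩

theorem lRel_mul_left (h : y * (x * s) = s) : LRel s (x * s) :=
  lRel_iff.2 (Or.inr ⟨⟨y, h.symm⟩, x, rfl⟩)

theorem rRel_mul_right (h : s * x * y = s) : RRel s (s * x) :=
  rRel_iff.2 (Or.inr ⟨⟨y, h.symm⟩, x, rfl⟩)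

namespace LRel

theorem symm (h : LRel s t) : LRel t s := Eq.symm h

theorem trans (hst : LRel s t) (htu : LRel t u) : LRel s u := Eq.trans hst htu

theorem mul_right (h : LRel s t) (c : S) : LRel (s * c) (t * c) := by
  rcases lRel_iff.1 h with rfl | ⟨⟨a, ha⟩, b, hb⟩
  · rfl
  · exact lRel_iff.2 (Or.inr ⟨⟨a, by rw [← mul_assoc, ← ha]⟩, b, by rw [← mul_assoc, ← hb]⟩)

theorem mul_eq_self (h : LRel s t) (ht : t * x = t) : s * x = s := by
  rcases lRel_iff.1 h with rfl | ⟨⟨a, rfl⟩, -⟩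
  · exact ht
  · rw [mul_assoc, ht]

theorem exists_mul_eq_mul (h : LRel s t) (c : S) : ∃ d, c * s = d * t := by
  rcases lRel_iff.1 h with rfl | ⟨⟨a, rfl⟩, -⟩
  · exact ⟨c, rfl⟩
  · exact ⟨c * a, (mul_assoc c a t).symm⟩

theorem exists_weakInverse_rRel (h : LRel s t) (hz : z = z * s * z) :
    ∃ w, w = w * t * w ∧ RRel z w := by
  rcases lRel_iff.1 h with rfl | ⟨⟨a, rfl⟩, -⟩
  · exact ⟨z, hz, rfl⟩
  · have hza : z * a * (t * z) = z := by simpa only [mul_assoc] using hz.symm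
    refine ⟨z * a, ?_, rRel_mul_right hza⟩
    calc z * a = z * a * (t * z) * a := by rw [hza]
      _ = z * a * t * (z * a) := by simp only [mul_assoc]

end LRel

namespace RRel

theorem symm (h : RRel s t) : RRel t s := Eq.symm h

theorem trans (hst : RRel s t) (htu : RRel t u) : RRel s u := Eq.trans hst htu

theorem mul_eq_self (h : RRel s t) (ht : x * t = t) : x * s = s := by
  rcases rRel_iff.1 h with rfl | ⟨⟨a, rfl⟩, -⟩
  · exact ht
  · rw [← mul_assoc, ht]

theorem exists_mul_eq_mul (h : RRel s t) (c : S) : ∃ d, s * c = t * d := by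
  rcases rRel_iff.1 h with rfl | ⟨⟨a, rfl⟩, -⟩
  · exact ⟨c, rfl⟩
  · exact ⟨a * c, mul_assoc t a c⟩

theorem exists_weakInverse_lRel (h : RRel s t) (hz : z = z * s * z) :
    ∃ w, w = w * t * w ∧ LRel z w := by
  rcases rRel_iff.1 h with rfl | ⟨⟨a, rfl⟩, -⟩
  · exact ⟨z, hz, rfl⟩
  · have haz : z * t * (a * z) = z := by simpa only [mul_assoc] using hz.symm
    refine ⟨a * z, ?_, lRel_mul_left haz⟩
    calc a * z = a * (z * t * (a * z)) := by rw [haz]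
      _ = a * z * t * (a * z) := by simp only [mul_assoc]

end RRel

theorem LRel.dRel (h : LRel s t) : DRel s t := ⟨t, h, rfl⟩

theorem RRel.dRel (h : RRel s t) : DRel s t := ⟨s, rfl, h⟩

namespace DRel

theorem exists_rRel_lRel (h : DRel s t) : ∃ v, RRel s v ∧ LRel v t := by
  obtain ⟨u, hsu, hut⟩ := h
  rcases rRel_iff.1 hut with rfl | ⟨⟨a, ha⟩, b, rfl⟩
  · exact ⟨s, rfl, hsu⟩
  · have hs : s * (b * a) = s := hsu.mul_eq_self (by rw [← mul_assoc, ← ha])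
    exact ⟨s * b, rRel_mul_right (by rw [mul_assoc, hs]), hsu.mul_right b⟩

theorem symm (h : DRel s t) : DRel t s :=
  let ⟨v, hsv, hvt⟩ := h.exists_rRel_lRel
  ⟨v, hvt.symm, hsv.symm⟩

theorem trans (hst : DRel s t) (htu : DRel t u) : DRel s u := by
  obtain ⟨p, hsp, hpt⟩ := hst
  obtain ⟨q, htq, hqu⟩ := htu
  have hqp : DRel q p := ⟨t, htq.symm, hpt.symm⟩
  obtain ⟨v, hqv, hvp⟩ := hqp.exists_rRel_lRel
  exact ⟨v, hsp.trans hvp.symm, hqv.symm.trans hqu⟩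

theorem exists_weakInverse (h : DRel s t) (hz : z = z * s * z) :
    ∃ w, w = w * t * w ∧ DRel z w := by
  obtain ⟨u, hsu, hut⟩ := h
  obtain ⟨v, hv, hzv⟩ := hsu.exists_weakInverse_rRel hz
  obtain ⟨w, hw, hvw⟩ := hut.exists_weakInverse_lRel hv
  exact ⟨w, hw, hzv.dRel.trans hvw.dRel⟩

theorem rhoRel (h : DRel s t) : rhoRel s t := by
  have transport {s t : S} (hst : DRel s t) (x : S) :
      (∃ z, z = z * s * z ∧ DRel z x) → ∃ z, z = z * t * z ∧ DRel z x := by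
    rintro ⟨z, hz, hzx⟩
    obtain ⟨w, hw, hzw⟩ := hst.exists_weakInverse hz
    exact ⟨w, hw, hzw.symm.trans hzx⟩
  exact fun x => ⟨transport h x, transport h.symm x⟩

end DRel

theorem IsRegularElem.exists_isIdempotentElem_dRel (hs : IsRegularElem s) :
    ∃ e, IsIdempotentElem e ∧ DRel s e := by
  obtain ⟨x, hx⟩ := hs
  exact ⟨s * x, by rw [IsIdempotentElem, ← mul_assoc, ← hx], (rRel_mul_right hx.symm).dRel⟩

theorem IsRegularElem.exists_weakInverse_dRel (hs : IsRegularElem s) :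
    ∃ z, z = z * s * z ∧ DRel z s := by
  obtain ⟨x, hx⟩ := hs
  have hsx : s * (x * s) = s := by rw [← mul_assoc, ← hx]
  have hL : LRel s (x * s) := lRel_mul_left hsx
  have hR : RRel (x * s) (x * s * x) := rRel_mul_right (y := s) (by simp only [mul_assoc, hsx])
  refine ⟨x * s * x, ?_, (hL.dRel.trans hR.dRel).symm⟩
  calc x * s * x = x * (s * (x * (s * (x * s)))) * x := by simp only [hsx]
    _ = x * s * x * s * (x * s * x) := by simp only [mul_assoc]

theorem isRegularElem_of_isIdempotentElem (he : IsIdempotentElem e) : IsRegularElem e :=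
  ⟨e, by rw [he.eq, he.eq]⟩

/-- The preorder `s ≤ t` of Green's relation `𝒥`, in the form `s ∈ StS`. For regular `s`, the only
case of interest here, this amounts to the usual `s ∈ S¹tS¹`. -/
def JLE (s t : S) : Prop := ∃ a b, s = a * t * b

theorem JLE.trans (hst : JLE s t) (htu : JLE t u) : JLE s u := by
  obtain ⟨a, b, rfl⟩ := hst
  obtain ⟨c, d, rfl⟩ := htu
  exact ⟨a * c, d * b, by simp only [mul_assoc]⟩

theorem DRel.jLE (h : DRel s t) (hs : IsRegularElem s) : JLE s t := by
  obtain ⟨v, hsv, hvt⟩ := h.exists_rRel_lRel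
  obtain ⟨x, hx⟩ := hs
  obtain ⟨b, hb⟩ := hsv.exists_mul_eq_mul (x * s)
  obtain ⟨a, ha⟩ := hvt.exists_mul_eq_mul (s * x)
  refine ⟨a, b, ?_⟩
  calc s = s * x * (s * (x * s)) := by rw [← mul_assoc s x s, ← hx, ← hx]
    _ = a * t * b := by rw [hb, ← mul_assoc, ha]

theorem rhoRel.symm (h : rhoRel s t) : rhoRel t s := fun x => (h x).symm

theorem rhoRel.jLE (h : rhoRel s t) (hs : IsRegularElem s) : JLE s t := by
  obtain ⟨z, hz, hzs⟩ := (h s).1 hs.exists_weakInverse_dRel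
  exact (hzs.symm.jLE hs).trans ⟨z, z, hz⟩

theorem JLE.exists_isIdempotentElem_dRel (h : JLE e f) (he : IsIdempotentElem e)
    (hf : IsIdempotentElem f) :
    ∃ k, IsIdempotentElem k ∧ f * k = k ∧ k * f = k ∧ DRel e k := by
  obtain ⟨x, y, hxy⟩ := h
  obtain ⟨b, hb⟩ : ∃ b, b = e * x * f := ⟨_, rfl⟩
  obtain ⟨c, hc⟩ : ∃ c, c = f * y * e := ⟨_, rfl⟩
  have hbc : b * c = e := by
    calc b * c = e * (x * (f * f) * y) * e := by rw [hb, hc]; simp only [mul_assoc]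
      _ = e := by rw [hf.eq, ← hxy, he.eq, he.eq]
  have heb : e * b = b := by rw [hb, ← mul_assoc, ← mul_assoc, he.eq]
  have hbf : b * f = b := by rw [hb, mul_assoc, hf.eq]
  have hfc : f * c = c := by rw [hc, ← mul_assoc, ← mul_assoc, hf.eq]
  have hbcb : b * c * b = b := by rw [hbc, heb]
  have hD : DRel (c * b) (b * c) :=
    ⟨b, (lRel_mul_left (by rw [← mul_assoc, hbcb])).symm, rRel_mul_right hbcb⟩
  refine ⟨c * b, ?_, by rw [← mul_assoc, hfc], by rw [mul_assoc, hbf], hbc ▸ hD.symm⟩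
  rw [IsIdempotentElem, mul_assoc, ← mul_assoc b, hbcb]

namespace CondCompletelyRegular

theorem eq_of_jLE (hS : CondCompletelyRegular S) (hf : IsIdempotentElem f)
    (hk : IsIdempotentElem k) (hfk : f * k = k) (hkf : k * f = k) (h : JLE f k) : k = f := by
  obtain ⟨c, d, hcd⟩ := h
  obtain ⟨a, ha⟩ : ∃ a, a = f * c * k := ⟨_, rfl⟩
  have had : a * d = f := by
    calc a * d = f * (c * k * d) := by rw [ha]; simp only [mul_assoc]
      _ = f := by rw [← hcd, hf.eq]
  have hfa : f * a = a := by rw [ha, ← mul_assoc, ← mul_assoc, hf.eq]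
  have hak : a * k = a := by rw [ha, mul_assoc, hk.eq]
  obtain ⟨g, hg, hL, hR⟩ := hS a ⟨d, by rw [had, hfa]⟩
  have hgf : g * f = f := by rw [← had, ← mul_assoc, hR.mul_eq_self hg]
  have hgk : g * k = g := hL.symm.mul_eq_self hak
  have hfg : f = g := by
    calc f = g * k * f := by rw [hgk, hgf]
      _ = g := by rw [mul_assoc, hkf, hgk]
  rw [← hfk, hfg, hgk]

theorem dRel_of_isIdempotentElem (hS : CondCompletelyRegular S) (he : IsIdempotentElem e)
    (hf : IsIdempotentElem f) (hef : JLE e f) (hfe : JLE f e) : DRel e f := by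
  obtain ⟨k, hk, hfk, hkf, hek⟩ := hef.exists_isIdempotentElem_dRel he hf
  have hJ : JLE f k := hfe.trans (hek.jLE (isRegularElem_of_isIdempotentElem he))
  exact hS.eq_of_jLE hf hk hfk hkf hJ ▸ hek

theorem dRel_of_jLE (hS : CondCompletelyRegular S) (hs : IsRegularElem s) (ht : IsRegularElem t)
    (hst : JLE s t) (hts : JLE t s) : DRel s t := by
  obtain ⟨e, he, hse⟩ := hs.exists_isIdempotentElem_dRel
  obtain ⟨f, hf, htf⟩ := ht.exists_isIdempotentElem_dRel
  have hes : JLE e s := hse.symm.jLE (isRegularElem_of_isIdempotentElem he)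
  have hft : JLE f t := htf.symm.jLE (isRegularElem_of_isIdempotentElem hf)
  have hef : JLE e f := hes.trans (hst.trans (htf.jLE ht))
  have hfe : JLE f e := hft.trans (hts.trans (hse.jLE hs))
  exact hse.trans ((hS.dRel_of_isIdempotentElem he hf hef hfe).trans htf.symm)

end CondCompletelyRegular

end

/-- In a conditionally completely regular semigroup, for regular `s, t`:
`s ρ t` iff `s 𝒟 t`. -/
theorem stmt16 {S : Type*} [Semigroup S] (hS : CondCompletelyRegular S)
    (s t : S) (hs : IsRegularElem s) (ht : IsRegularElem t) :
    rhoRel s t ↔ DRel s t := by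
  exact ⟨fun h => hS.dRel_of_jLE hs ht (h.jLE hs) (h.symm.jLE ht), DRel.rhoRel⟩
end
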